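/- Let 𝕏 be a σ-finite measure space and T : ℳ → ℳ̃, S : 𝒩 → 𝒩̃ quotient operators between Banach L^0(𝕏)-modules. Then T ⊗_π S : ℳ ⊗̂_π 𝒩 → ℳ̃ ⊗̂_π 𝒩̃, the unique homomorphism with (T ⊗_π S)(v ⊗ w) = T(v) ⊗ S(w) for all v ∈ ℳ, w ∈ 𝒩, is a quotient operator. -/

import Mathlib

/-! By density the question reduces to algebraic tensors, whose factors can be lifted separately:
if `α' = ∑ v'ᵢ ⊗ w'ᵢ`, then lifts `vᵢ` of `v'ᵢ` and `wᵢ` of `w'ᵢ` give the lift `∑ vᵢ ⊗ wᵢ` of `α'`,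
and since sums and products of nonnegative functions commute with infima, the infimum of
`∑ |vᵢ||wᵢ|` over all choices of lifts is `∑ |v'ᵢ||w'ᵢ|`.

To pass from the dense submodule to the whole completion one needs a lift whose distance to `0` is
controlled by that of the given element. Gluing two preimages along the set where one of them has
the smaller norm shows that the norms on a fibre are closed under `⊓`, so that their infimum is
approached in measure by the norm of a single lift; successive approximation in the complete domain
then yields controlled lifts of all elements.
-/

open MeasureTheory Filter Set TensorProduct

noncomputable section

namespace Paper

variable {X : Type*} [MeasurableSpace X]

/-- The space `L⁰(𝕏)` of real-valued measurable functions up to `μ`-a.e. equality. -/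
abbrev L0 (μ : Measure X) : Type _ := X →ₘ[μ] ℝ

instance (μ : Measure X) : CommRing (L0 μ) :=
  { (inferInstance : AddCommGroup (L0 μ)), (inferInstance : CommMonoid (L0 μ)) with
    left_distrib := fun a b c => AEEqFun.toGerm_injective <| by
      simp only [AEEqFun.mul_toGerm, AEEqFun.add_toGerm, mul_add]
    right_distrib := fun a b c => AEEqFun.toGerm_injective <| by
      simp only [AEEqFun.mul_toGerm, AEEqFun.add_toGerm, add_mul]
    zero_mul := fun a => AEEqFun.toGerm_injective <| by
      simp only [AEEqFun.mul_toGerm, AEEqFun.zero_toGerm, zero_mul]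
    mul_zero := fun a => AEEqFun.toGerm_injective <| by
      simp only [AEEqFun.mul_toGerm, AEEqFun.zero_toGerm, mul_zero] }

/-- The distance on `L⁰(𝕏)` inducing the topology of convergence in measure, defined through
the auxiliary finite measure `μ.toFinite` (which satisfies `μ ≪ μ.toFinite ≪ μ`). -/
noncomputable def dL0 (μ : Measure X) [SFinite μ] (f g : L0 μ) : ℝ :=
  ∫ x, min |f x - g x| 1 ∂(μ.toFinite)

/-- A Banach `L⁰(𝕏)`-module: a module over `L⁰(𝕏)` endowed with a pointwise norm, complete
with respect to the induced distance. -/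
class BanachMod (μ : Measure X) [SFinite μ] (M : Type*) [AddCommGroup M]
    [Module (L0 μ) M] where
  pn : M → L0 μ
  pn_nonneg : ∀ v : M, 0 ≤ pn v
  pn_eq_zero : ∀ v : M, pn v = 0 ↔ v = 0
  pn_add_le : ∀ v w : M, pn (v + w) ≤ pn v + pn w
  pn_smul : ∀ (f : L0 μ) (v : M), pn (f • v) = |f| * pn v
  complete : ∀ u : ℕ → M,
    (∀ ε : ℝ, 0 < ε → ∃ N : ℕ, ∀ m ≥ N, ∀ n ≥ N, dL0 μ (pn (u m - u n)) 0 < ε) →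
    ∃ v : M, Tendsto (fun n => dL0 μ (pn (u n - v)) 0) atTop (nhds 0)

/-- The pointwise norm of a Banach `L⁰(𝕏)`-module, with the measure explicit. -/
noncomputable def pn (μ : Measure X) [SFinite μ] {M : Type*} [AddCommGroup M]
    [Module (L0 μ) M] [BanachMod μ M] (v : M) : L0 μ :=
  BanachMod.pn v

/-- The distance on a Banach `L⁰(𝕏)`-module. -/
noncomputable def dM (μ : Measure X) [SFinite μ] {M : Type*} [AddCommGroup M]
    [Module (L0 μ) M] [BanachMod μ M] (v w : M) : ℝ :=
  dL0 μ (pn μ (v - w)) 0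

section Defs

variable (μ : Measure X) [SFinite μ]
variable {M N : Type*} [AddCommGroup M] [Module (L0 μ) M] [BanachMod μ M]
  [AddCommGroup N] [Module (L0 μ) N] [BanachMod μ N]

/-- The set of admissible bounds of a map between Banach `L⁰(𝕏)`-modules; the pointwise norm
`|T|` of a homomorphism is the infimum of this set. -/
def homBddSet (T : M → N) : Set (L0 μ) :=
  {g | 0 ≤ g ∧ ∀ v, pn μ (T v) ≤ g * pn μ v}

/-- A homomorphism of Banach `L⁰(𝕏)`-modules: an `L⁰(𝕏)`-linear map admitting a bound
`g ∈ L⁰(𝕏)⁺` with `|T v| ≤ g |v|` (equivalently, `L⁰(𝕏)`-linear and continuous). -/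
def IsHom (T : M →ₗ[L0 μ] N) : Prop :=
  ∃ g, g ∈ homBddSet μ (⇑T)

/-- The set of admissible bounds of an `L⁰(𝕏)`-valued map (for elements of the dual module). -/
def dualBddSet (ω : M → L0 μ) : Set (L0 μ) :=
  {g | 0 ≤ g ∧ ∀ v, |ω v| ≤ g * pn μ v}

/-- Membership in the dual module `ℳ*`: an `L⁰(𝕏)`-linear map `ω : ℳ → L⁰(𝕏)` admitting a
bound `g ∈ L⁰(𝕏)⁺` with `|ω v| ≤ g |v|`. -/
def IsDual (ω : M →ₗ[L0 μ] L0 μ) : Prop :=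
  ∃ g, g ∈ dualBddSet μ (⇑ω)

/-- Membership in the unit disc `𝔻_{ℳ*}` of the dual module: `|ω| ≤ 1`, equivalently
`|ω v| ≤ |v|` for every `v`. -/
def InDualDisc (ω : M →ₗ[L0 μ] L0 μ) : Prop :=
  ∀ v, |ω v| ≤ pn μ v

/-- The family of pointwise norms `|s - ∑_{i ∈ F ∪ G} v i|` for `G` finite disjoint from `F`,
whose `F`-indexed inf-sup being `0` defines `s = ∑_{i∈I} v i`. -/
def sumUB {I : Type*} (v : I → M) (s : M) (F : Finset I) : Set (L0 μ) :=
  {g | ∃ G : Finset I, Disjoint G F ∧ g = pn μ (s - (∑ i ∈ F, v i + ∑ i ∈ G, v i))}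

/-- `HasSumMod μ v s` means that the family `{v_i}` is summable in the Banach `L⁰(𝕏)`-module
with sum `s`, i.e. `⋀_F ⋁_G |s - ∑_{i ∈ F ∪ G} v_i| = 0` (the inner suprema being the values
of `b`, and the outer infimum being `0`). -/
def HasSumMod {I : Type*} (v : I → M) (s : M) : Prop :=
  ∃ b : Finset I → L0 μ, (∀ F, IsLUB (sumUB μ v s F) (b F)) ∧ IsGLB (Set.range b) 0

/-- A family in a Banach `L⁰(𝕏)`-module is summable if it has a sum. -/
def SummableMod {I : Type*} (v : I → M) : Prop :=
  ∃ s, HasSumMod μ v s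

/-- The partial sums `∑_{i ∈ F} |v i|` of the pointwise norms of a family; the element `|v|₁`
of `ℓ₁(I, ℳ)` is the supremum of this set. -/
def l1PartialSums {I : Type*} (v : I → M) : Set (L0 μ) :=
  {g | ∃ F : Finset I, g = ∑ i ∈ F, pn μ (v i)}

/-- Membership in `ℓ₁(I, ℳ)`: the partial sums of the pointwise norms admit a supremum
(equivalently, an upper bound) in `L⁰(𝕏)`. -/
def Meml1 {I : Type*} (v : I → M) : Prop :=
  ∃ b, IsLUB (l1PartialSums μ v) b

/-- The partial sums `∑_{i ∈ F} |v i|` for an `L⁰(𝕏)`-valued family. -/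
def l1PartialSumsF {I : Type*} (v : I → L0 μ) : Set (L0 μ) :=
  {g | ∃ F : Finset I, g = ∑ i ∈ F, |v i|}

/-- Membership in `ℓ₁(I, L⁰(𝕏))`. -/
def Meml1F {I : Type*} (v : I → L0 μ) : Prop :=
  ∃ b, IsLUB (l1PartialSumsF μ v) b

/-- The set whose infimum defines the projective pointwise norm: all values
`∑_{i=1}^n |v_i||w_i|` over representations `α = ∑_{i=1}^n v_i ⊗ w_i`. -/
def piReps (α : M ⊗[L0 μ] N) : Set (L0 μ) :=
  {g | ∃ (n : ℕ) (v : Fin n → M) (w : Fin n → N),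
    α = ∑ i, v i ⊗ₜ[L0 μ] w i ∧ g = ∑ i, pn μ (v i) * pn μ (w i)}

/-- The set whose supremum defines the injective pointwise norm: all values
`|∑_{i=1}^n ω(v_i) η(w_i)|` over representations `α = ∑_{i=1}^n v_i ⊗ w_i` and elements
`ω ∈ 𝔻_{ℳ*}`, `η ∈ 𝔻_{𝒩*}`. -/
def epsReps (α : M ⊗[L0 μ] N) : Set (L0 μ) :=
  {g | ∃ (n : ℕ) (v : Fin n → M) (w : Fin n → N)
    (ω : M →ₗ[L0 μ] L0 μ) (η : N →ₗ[L0 μ] L0 μ), InDualDisc μ ω ∧ InDualDisc μ η ∧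
    α = ∑ i, v i ⊗ₜ[L0 μ] w i ∧ g = |∑ i, ω (v i) * η (w i)|}

/-- `IsPiTensor μ M N P e` states that the Banach `L⁰(𝕏)`-module `P`, together with the
`L⁰(𝕏)`-linear map `e` defined on the algebraic tensor product, realizes the projective
tensor product `ℳ ⊗̂_π 𝒩`: the pointwise norm of `e α` is the projective pointwise norm
`|α|_π` and the image of `e` is dense. -/
structure IsPiTensor (M N P : Type*) [AddCommGroup M] [Module (L0 μ) M] [BanachMod μ M]
    [AddCommGroup N] [Module (L0 μ) N] [BanachMod μ N]
    [AddCommGroup P] [Module (L0 μ) P] [BanachMod μ P]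
    (e : M ⊗[L0 μ] N →ₗ[L0 μ] P) : Prop where
  pn_emb : ∀ α : M ⊗[L0 μ] N, IsGLB (piReps μ α) (pn μ (e α))
  dense : ∀ p : P, ∀ ε : ℝ, 0 < ε → ∃ α : M ⊗[L0 μ] N, dM μ (e α) p < ε

/-- `IsEpsTensor μ M N P e` states that the Banach `L⁰(𝕏)`-module `P`, together with the
`L⁰(𝕏)`-linear map `e` defined on the algebraic tensor product, realizes the injective
tensor product `ℳ ⊗̂_ε 𝒩`: the pointwise norm of `e α` is the injective pointwise norm
`|α|_ε` and the image of `e` is dense. -/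
structure IsEpsTensor (M N P : Type*) [AddCommGroup M] [Module (L0 μ) M] [BanachMod μ M]
    [AddCommGroup N] [Module (L0 μ) N] [BanachMod μ N]
    [AddCommGroup P] [Module (L0 μ) P] [BanachMod μ P]
    (e : M ⊗[L0 μ] N →ₗ[L0 μ] P) : Prop where
  pn_emb : ∀ α : M ⊗[L0 μ] N, IsLUB (epsReps μ α) (pn μ (e α))
  dense : ∀ p : P, ∀ ε : ℝ, 0 < ε → ∃ α : M ⊗[L0 μ] N, dM μ (e α) p < ε

end Defs

/-- A quotient operator between Banach `L⁰(𝕏)`-modules: a surjective homomorphism `T` such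
that `|w| = ⋀_{v ∈ T⁻¹(w)} |v|` for every `w`. -/
def IsQuotientOp (μ : Measure X) [SFinite μ] {M N : Type*} [AddCommGroup M] [Module (L0 μ) M]
    [BanachMod μ M] [AddCommGroup N] [Module (L0 μ) N] [BanachMod μ N]
    (T : M →ₗ[L0 μ] N) : Prop :=
  IsHom μ T ∧ Function.Surjective T ∧
    ∀ w : N, IsGLB {g : L0 μ | ∃ v : M, T v = w ∧ g = pn μ v} (pn μ w)

section OrderLemmas

open scoped Pointwise

lemma isGLB_finsetSum {ι G : Type*} [AddCommGroup G] [Preorder G] [AddLeftMono G]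
    {t : Finset ι} {A : ι → Set G} {a : ι → G} (h : ∀ i ∈ t, IsGLB (A i) (a i)) :
    IsGLB (∑ i ∈ t, A i) (∑ i ∈ t, a i) := by
  classical
  induction t using Finset.induction_on with
  | empty => simp [← Set.singleton_zero]
  | insert i t hi ih =>
    rw [Finset.sum_insert hi, Finset.sum_insert hi]
    exact (h i (Finset.mem_insert_self i t)).add
      (ih fun j hj => h j (Finset.mem_insert_of_mem hj))

lemma isGLB_image_mul_left {R : Type*} [CommRing R] [PartialOrder R] [IsOrderedRing R]
    {f g : R} (hf : 0 ≤ f) (hg : 0 ≤ g) (hfg : g * (1 + f) = 1) {A : Set R} {a : R}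
    (hA : IsGLB A a) : IsGLB ((f * ·) '' A) (f * a) := by
  refine ⟨?_, fun c hc => ?_⟩
  · rintro _ ⟨x, hx, rfl⟩
    exact mul_le_mul_of_nonneg_left (hA.1 hx) hf
  -- If `c ≤ f x`, then `a + g (c - f a) ≤ x` because `g f ≤ 1`.
  have hgf : g * f ≤ 1 := by linear_combination hg + hfg
  have hle : a + g * (c - f * a) ≤ a := hA.2 fun x hx => by
    have hcx : c ≤ f * x := hc ⟨x, hx, rfl⟩
    calc a + g * (c - f * a) ≤ a + g * (f * x - f * a) := by gcongr
      _ = a + g * f * (x - a) := by ring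
      _ ≤ a + 1 * (x - a) := by
        gcongr
        exact sub_nonneg.2 (hA.1 hx)
      _ = x := by ring
  have hneg : g * (c - f * a) ≤ 0 := by simpa using hle
  rw [← sub_nonpos]
  calc c - f * a = g * (1 + f) * (c - f * a) := by rw [hfg, one_mul]
    _ = (1 + f) * (g * (c - f * a)) := by ring
    _ ≤ 0 := mul_nonpos_of_nonneg_of_nonpos (add_nonneg zero_le_one hf) hneg

lemma exists_antitone_tendsto_sInf_image {α : Type*} [SemilatticeInf α] {D : Set α}
    (hne : D.Nonempty) (hD : InfClosed D) {J : α → ℝ} (hJ : MonotoneOn J D)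
    (hbdd : BddBelow (J '' D)) :
    ∃ u : ℕ → α, Antitone u ∧ (∀ n, u n ∈ D) ∧
      Tendsto (fun n => J (u n)) atTop (nhds (sInf (J '' D))) := by
  obtain ⟨r, -, hr, hrD⟩ := exists_seq_tendsto_sInf (hne.image J) hbdd
  choose v hvD hvr using hrD
  let u : ℕ → α := fun n => (Finset.range (n + 1)).inf' Finset.nonempty_range_add_one v
  have huD (n : ℕ) : u n ∈ D := hD.finsetInf'_mem _ fun i _ => hvD i
  have huv (n : ℕ) : u n ≤ v n := Finset.inf'_le v (Finset.self_mem_range_succ n)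
  refine ⟨u, antitone_nat_of_succ_le fun n => ?_, huD,
    tendsto_of_tendsto_of_tendsto_of_le_of_le tendsto_const_nhds hr
      (fun n => csInf_le hbdd ⟨u n, huD n, rfl⟩)
      fun n => (hJ (huD n) (hvD n) (huv n)).trans_eq (hvr n)⟩
  exact Finset.inf'_mono v (Finset.range_mono (Nat.le_succ _)) _

end OrderLemmas

namespace L0

variable {μ : Measure X}

instance : IsOrderedRing (L0 μ) :=
  Function.Injective.isOrderedRing AEEqFun.toGerm AEEqFun.zero_toGerm AEEqFun.one_toGerm
    AEEqFun.add_toGerm AEEqFun.mul_toGerm fun {f g} => by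
      rw [AEEqFun.toGerm_eq, AEEqFun.toGerm_eq, Germ.coe_le, AEEqFun.coeFn_le]

lemma exists_nonneg_mul_one_add_eq_one {f : L0 μ} (hf : 0 ≤ f) :
    ∃ g : L0 μ, 0 ≤ g ∧ g * (1 + f) = 1 := by
  have hpos (t : ℝ) : 0 < 1 + |t| := by positivity
  have hcont : Continuous fun t : ℝ => (1 + |t|)⁻¹ :=
    (continuous_const.add continuous_abs).inv₀ fun t => (hpos t).ne'
  have hcoe := AEEqFun.coeFn_comp _ hcont f
  refine ⟨AEEqFun.comp _ hcont f, AEEqFun.coeFn_le.1 ?_, AEEqFun.ext ?_⟩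
  · filter_upwards [AEEqFun.coeFn_zero (μ := μ) (β := ℝ), hcoe] with x h0 hx
    rw [h0, hx]
    exact (inv_pos.2 (hpos _)).le
  · nth_rewrite 2 [← abs_of_nonneg hf]
    filter_upwards [hcoe, AEEqFun.coeFn_mul (AEEqFun.comp _ hcont f) (1 + |f|),
      AEEqFun.coeFn_add 1 |f|, AEEqFun.coeFn_one (μ := μ) (β := ℝ), AEEqFun.coeFn_abs f]
      with x hx hmul hadd hone habs
    rw [hmul, Pi.mul_apply, hadd, Pi.add_apply, hx, hone, habs]
    exact inv_mul_cancel₀ (hpos (f x)).ne'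

lemma isGLB_image_mul_left {f : L0 μ} (hf : 0 ≤ f) {A : Set (L0 μ)} {a : L0 μ}
    (hA : IsGLB A a) : IsGLB ((f * ·) '' A) (f * a) :=
  have ⟨_, hg, hfg⟩ := exists_nonneg_mul_one_add_eq_one hf
  Paper.isGLB_image_mul_left hf hg hfg hA

open scoped Pointwise in
lemma isGLB_mul {A B : Set (L0 μ)} {a b : L0 μ} (hA0 : ∀ f ∈ A, 0 ≤ f) (hB0 : ∀ g ∈ B, 0 ≤ g)
    (hA : IsGLB A a) (hB : IsGLB B b) : IsGLB (A * B) (a * b) := by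
  have ha : 0 ≤ a := hA.2 hA0
  refine ⟨?_, fun c hc => (isGLB_image_mul_left ha hB).2 ?_⟩
  · rintro _ ⟨f, hf, g, hg, rfl⟩
    exact mul_le_mul (hA.1 hf) (hB.1 hg) (hB.2 hB0) (hA0 f hf)
  · rintro _ ⟨g, hg, rfl⟩
    refine ((isGLB_image_mul_left (hB0 g hg) hA).2 ?_).trans_eq (mul_comm g a)
    rintro _ ⟨f, hf, rfl⟩
    exact (hc (Set.mul_mem_mul hf hg)).trans_eq (mul_comm f g)

lemma exists_isIdempotentElem_mul_add_eq_inf (f g : L0 μ) :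
    ∃ χ : L0 μ, IsIdempotentElem χ ∧ 0 ≤ χ ∧ χ ≤ 1 ∧ χ * f + (1 - χ) * g = f ⊓ g := by
  have hA : MeasurableSet {x | f x ≤ g x} := measurableSet_le f.measurable g.measurable
  have hm : AEStronglyMeasurable ({x | f x ≤ g x}.indicator (1 : X → ℝ)) μ :=
    (stronglyMeasurable_one.indicator hA).aestronglyMeasurable
  have hχ := AEEqFun.coeFn_mk _ hm
  have hone := AEEqFun.coeFn_one (μ := μ) (β := ℝ)
  set χ : L0 μ := AEEqFun.mk _ hm
  refine ⟨χ, AEEqFun.ext ?_, AEEqFun.coeFn_le.1 ?_, AEEqFun.coeFn_le.1 ?_, AEEqFun.ext ?_⟩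
  · filter_upwards [hχ, AEEqFun.coeFn_mul χ χ] with x hx hmul
    rw [hmul, Pi.mul_apply, hx, ← Set.inter_indicator_mul, Set.inter_self]
    simp [Set.indicator_apply]
  · filter_upwards [hχ, AEEqFun.coeFn_zero (μ := μ) (β := ℝ)] with x hx h0
    rw [h0, hx]
    exact Set.indicator_nonneg (fun _ _ => zero_le_one) x
  · filter_upwards [hχ, hone] with x hx h1
    rw [h1, hx]
    exact Set.indicator_le_self' (fun _ _ => zero_le_one) x
  · filter_upwards [hχ, hone, AEEqFun.coeFn_add (χ * f) ((1 - χ) * g), AEEqFun.coeFn_mul χ f,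
      AEEqFun.coeFn_mul (1 - χ) g, AEEqFun.coeFn_sub 1 χ, AEEqFun.coeFn_inf f g]
      with x hx h1 hadd hmul hmul' hsub hinf
    simp only [hadd, hmul, hmul', hsub, hinf, h1, hx, Pi.add_apply, Pi.mul_apply, Pi.sub_apply]
    by_cases hfg : f x ≤ g x
    · simp [hfg]
    · simp [hfg, le_of_not_ge hfg]

lemma nonpos_of_inf_one_nonpos {f : L0 μ} (h : f ⊓ 1 ≤ 0) : f ≤ 0 := by
  rw [← AEEqFun.coeFn_le] at h ⊢
  filter_upwards [h, AEEqFun.coeFn_inf f 1, AEEqFun.coeFn_zero (μ := μ) (β := ℝ),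
    AEEqFun.coeFn_one (μ := μ) (β := ℝ)] with x hx hinf h0 h1
  rw [hinf, h0, h1] at hx
  rw [h0]
  exact (inf_le_iff.1 hx).resolve_right zero_lt_one.not_ge

lemma exists_tendsto_of_antitone {u : ℕ → L0 μ} {g : L0 μ} (hu : Antitone u)
    (hg : ∀ n, g ≤ u n) :
    ∃ l : L0 μ, g ≤ l ∧ ∀ᵐ x ∂μ, Tendsto (fun n => u n x) atTop (nhds (l x)) := by
  have hm : AEStronglyMeasurable (fun x => ⨅ n, u n x) μ :=
    (Measurable.iInf fun n => (u n).measurable).aestronglyMeasurable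
  have hl := AEEqFun.coeFn_mk _ hm
  have hanti : ∀ᵐ x ∂μ, ∀ n, u (n + 1) x ≤ u n x :=
    ae_all_iff.2 fun n => AEEqFun.coeFn_le.2 (hu n.le_succ)
  have hlb : ∀ᵐ x ∂μ, ∀ n, g x ≤ u n x := ae_all_iff.2 fun n => AEEqFun.coeFn_le.2 (hg n)
  refine ⟨AEEqFun.mk _ hm, AEEqFun.coeFn_le.1 ?_, ?_⟩
  · filter_upwards [hl, hlb] with x hx hlb
    exact (le_ciInf hlb).trans_eq hx.symm
  · filter_upwards [hl, hanti, hlb] with x hx hanti hlb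
    rw [hx]
    exact tendsto_atTop_ciInf (antitone_nat_of_succ_le hanti) ⟨g x, forall_mem_range.2 hlb⟩

end L0

section Distance

variable {μ : Measure X} [SFinite μ]

lemma dL0_zero_right (f : L0 μ) : dL0 μ f 0 = ∫ x, min |f x| 1 ∂μ.toFinite := by
  refine integral_congr_ae (toFinite_absolutelyContinuous μ |>.ae_le ?_)
  filter_upwards [AEEqFun.coeFn_zero (μ := μ) (β := ℝ)] with x hx
  simp [hx]

lemma norm_min_abs_one_le (t : ℝ) : ‖min |t| 1‖ ≤ 1 := by
  rw [Real.norm_of_nonneg (by positivity)]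
  exact min_le_right _ _

lemma integrable_min_abs_one (f : L0 μ) : Integrable (fun x => min |f x| 1) μ.toFinite :=
  .of_bound ((continuous_abs.min continuous_const).comp_aestronglyMeasurable
    f.stronglyMeasurable.aestronglyMeasurable) 1 (ae_of_all _ fun _ => norm_min_abs_one_le _)

lemma dL0_le_add_of_abs_le {f g k : L0 μ} (h : |f| ≤ |g| + |k|) :
    dL0 μ f 0 ≤ dL0 μ g 0 + dL0 μ k 0 := by
  simp only [dL0_zero_right]
  rw [← integral_add (integrable_min_abs_one g) (integrable_min_abs_one k)]
  refine integral_mono_ae (integrable_min_abs_one f)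
    ((integrable_min_abs_one g).add (integrable_min_abs_one k))
    (toFinite_absolutelyContinuous μ |>.ae_le ?_)
  filter_upwards [AEEqFun.coeFn_le.2 h, AEEqFun.coeFn_abs f, AEEqFun.coeFn_add |g| |k|,
    AEEqFun.coeFn_abs g, AEEqFun.coeFn_abs k] with x hx hf hadd hg hk
  rw [hf, hadd, Pi.add_apply, hg, hk] at hx
  have hg0 := abs_nonneg (g x)
  have hk0 := abs_nonneg (k x)
  grind

lemma dL0_self (f : L0 μ) : dL0 μ f f = 0 := by simp [dL0]

lemma dL0_le_of_abs_le {f g : L0 μ} (h : |f| ≤ |g|) : dL0 μ f 0 ≤ dL0 μ g 0 := by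
  have := dL0_le_add_of_abs_le (f := f) (g := g) (k := 0) (by rwa [abs_zero, add_zero])
  rwa [dL0_self, add_zero] at this

lemma dL0_mono {f g : L0 μ} (hf : 0 ≤ f) (hfg : f ≤ g) : dL0 μ f 0 ≤ dL0 μ g 0 :=
  dL0_le_of_abs_le (by rwa [abs_of_nonneg hf, abs_of_nonneg (hf.trans hfg)])

lemma dL0_nonneg (f g : L0 μ) : 0 ≤ dL0 μ f g :=
  integral_nonneg fun _ => le_min (abs_nonneg _) zero_le_one

lemma abs_inf_one_le_of_dL0_le {f g : L0 μ} (hfg : |f| ≤ |g|) (h : dL0 μ g 0 ≤ dL0 μ f 0) :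
    |g| ⊓ 1 ≤ |f| := by
  have hle : (fun x => min |f x| 1) ≤ᵐ[μ.toFinite] fun x => min |g x| 1 := by
    refine toFinite_absolutelyContinuous μ |>.ae_le ?_
    filter_upwards [AEEqFun.coeFn_le.2 hfg, AEEqFun.coeFn_abs f, AEEqFun.coeFn_abs g]
      with x hx hf hg
    rw [hf, hg] at hx
    exact min_le_min_right 1 hx
  have heq := (integral_eq_iff_of_ae_le (integrable_min_abs_one f) (integrable_min_abs_one g)
    hle).1 (by simpa only [dL0_zero_right] using (dL0_le_of_abs_le hfg).antisymm h)
  rw [← AEEqFun.coeFn_le]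
  filter_upwards [absolutelyContinuous_toFinite μ |>.ae_le heq, AEEqFun.coeFn_inf |g| 1,
    AEEqFun.coeFn_abs f, AEEqFun.coeFn_abs g, AEEqFun.coeFn_one (μ := μ) (β := ℝ)]
    with x hx hinf hf hg h1
  rw [hinf, hf, hg, h1]
  exact hx.symm.trans_le (min_le_left _ _)

lemma dL0_zero_right_nonpos_iff {f : L0 μ} : dL0 μ f 0 ≤ 0 ↔ f = 0 := by
  refine ⟨fun h => ?_, by rintro rfl; exact (dL0_self 0).le⟩
  have habs : |f| ⊓ 1 ≤ |0| := abs_inf_one_le_of_dL0_le (abs_zero.trans_le (abs_nonneg f))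
    (h.trans_eq (dL0_self 0).symm)
  have hf : |f| ≤ 0 := L0.nonpos_of_inf_one_nonpos (habs.trans_eq abs_zero)
  exact le_antisymm ((le_abs_self f).trans hf) (neg_nonpos.1 ((neg_le_abs f).trans hf))

lemma nonpos_of_forall_exists_le_dL0_lt {f : L0 μ}
    (h : ∀ ε > 0, ∃ u, f ≤ u ∧ dL0 μ u 0 < ε) : f ≤ 0 := by
  refine posPart_eq_zero.1 (dL0_zero_right_nonpos_iff.1 (le_of_forall_gt fun ε hε => ?_))
  obtain ⟨u, hfu, hu⟩ := h ε hε
  refine (dL0_le_of_abs_le ?_).trans_lt hu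
  rw [abs_of_nonneg (posPart_nonneg f)]
  exact sup_le (hfu.trans (le_abs_self u)) (abs_nonneg u)

lemma tendsto_dL0_zero_right {f : ℕ → L0 μ} {g : L0 μ}
    (h : ∀ᵐ x ∂μ, Tendsto (fun n => f n x) atTop (nhds (g x))) :
    Tendsto (fun n => dL0 μ (f n) 0) atTop (nhds (dL0 μ g 0)) := by
  simp only [dL0_zero_right]
  refine tendsto_integral_of_dominated_convergence (fun _ => 1)
    (fun n => (integrable_min_abs_one (f n)).aestronglyMeasurable) (integrable_const _)
    (fun n => ae_of_all _ fun x => norm_min_abs_one_le _)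
    (toFinite_absolutelyContinuous μ |>.ae_le ?_)
  filter_upwards [h] with x hx
  exact hx.abs.min tendsto_const_nhds

lemma exists_mem_dL0_lt_of_isGLB_zero {D : Set (L0 μ)} (hne : D.Nonempty) (hD : InfClosed D)
    (hg : IsGLB D 0) {ε : ℝ} (hε : 0 < ε) : ∃ d ∈ D, dL0 μ d 0 < ε := by
  have hbdd : BddBelow ((dL0 μ · 0) '' D) := ⟨0, forall_mem_image.2 fun d _ => dL0_nonneg d 0⟩
  obtain ⟨u, hu, huD, hlim⟩ := exists_antitone_tendsto_sInf_image hne hD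
    (fun f hf _ _ hfg => dL0_mono (hg.1 hf) hfg) hbdd
  obtain ⟨l, hl0, hul⟩ := L0.exists_tendsto_of_antitone hu fun n => hg.1 (huD n)
  have hl : dL0 μ l 0 = sInf ((dL0 μ · 0) '' D) :=
    tendsto_nhds_unique (tendsto_dL0_zero_right hul) hlim
  -- `l` minimizes the distance to `0` also against `a ⊓ l`, so it lies below `a` up to truncation.
  have hla (a : L0 μ) (ha : a ∈ D) : l ⊓ 1 ≤ a := by
    have hal : 0 ≤ a ⊓ l := le_inf (hg.1 ha) hl0
    have hlim' : Tendsto (fun n => dL0 μ (a ⊓ u n) 0) atTop (nhds (dL0 μ (a ⊓ l) 0)) := by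
      refine tendsto_dL0_zero_right ?_
      filter_upwards [hul, AEEqFun.coeFn_inf a l, ae_all_iff.2 fun n => AEEqFun.coeFn_inf a (u n)]
        with x hx hal hau
      simpa only [hal, hau] using tendsto_const_nhds.inf_nhds hx
    have hle : dL0 μ l 0 ≤ dL0 μ (a ⊓ l) 0 :=
      hl.trans_le (ge_of_tendsto' hlim' fun n => csInf_le hbdd ⟨_, hD ha (huD n), rfl⟩)
    have habs := abs_inf_one_le_of_dL0_le (f := a ⊓ l) (g := l)
      (by simpa only [abs_of_nonneg hal, abs_of_nonneg hl0] using inf_le_right) hle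
    rw [abs_of_nonneg hal, abs_of_nonneg hl0] at habs
    exact habs.trans inf_le_left
  have hl_nonpos : l ≤ 0 := L0.nonpos_of_inf_one_nonpos (hg.2 hla)
  rw [← hl, hl_nonpos.antisymm hl0, dL0_self] at hlim
  obtain ⟨n, hn⟩ := (hlim.eventually_lt_const hε).exists
  exact ⟨u n, huD n, hn⟩

lemma exists_mem_dL0_sub_lt_of_isGLB {D : Set (L0 μ)} {g : L0 μ} (hne : D.Nonempty)
    (hD : InfClosed D) (hg : IsGLB D g) {ε : ℝ} (hε : 0 < ε) :
    ∃ d ∈ D, dL0 μ (d - g) 0 < ε := by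
  have hD' : InfClosed ((· - g) '' D) := by
    rintro _ ⟨a, ha, rfl⟩ _ ⟨b, hb, rfl⟩
    exact ⟨a ⊓ b, hD ha hb, inf_sub a b g⟩
  have hg' : IsGLB ((· - g) '' D) 0 :=
    sub_self g ▸ (OrderIso.subRight g).isGLB_image'.2 hg
  obtain ⟨_, ⟨d, hd, rfl⟩, hdε⟩ := exists_mem_dL0_lt_of_isGLB_zero (hne.image _) hD' hg' hε
  exact ⟨d, hd, hdε⟩

end Distance

section Modules

variable {μ : Measure X} [SFinite μ] {M : Type*} [AddCommGroup M] [Module (L0 μ) M] [BanachMod μ M]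

lemma pn_nonneg (v : M) : 0 ≤ pn μ v := BanachMod.pn_nonneg v

lemma pn_eq_zero {v : M} : pn μ v = 0 ↔ v = 0 := BanachMod.pn_eq_zero v

lemma pn_zero : pn μ (0 : M) = 0 := pn_eq_zero.2 rfl

lemma pn_add_le (v w : M) : pn μ (v + w) ≤ pn μ v + pn μ w := BanachMod.pn_add_le v w

lemma pn_smul (f : L0 μ) (v : M) : pn μ (f • v) = |f| * pn μ v := BanachMod.pn_smul f v

lemma pn_smul_of_nonneg {f : L0 μ} (hf : 0 ≤ f) (v : M) : pn μ (f • v) = f * pn μ v := by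
  rw [pn_smul, abs_of_nonneg hf]

lemma pn_neg (v : M) : pn μ (-v) = pn μ v := by
  rw [← neg_one_smul (L0 μ) v, pn_smul, abs_neg, abs_of_nonneg zero_le_one, one_mul]

lemma pn_sub_rev (v w : M) : pn μ (v - w) = pn μ (w - v) := by rw [← neg_sub, pn_neg]

lemma pn_le_pn_sub_add (v w : M) : pn μ v ≤ pn μ (v - w) + pn μ w := by
  simpa only [sub_add_cancel] using pn_add_le (v - w) w

lemma pn_smul_add_one_sub_smul {χ : L0 μ} (hχ : IsIdempotentElem χ) (h0 : 0 ≤ χ) (h1 : χ ≤ 1)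
    (v w : M) : pn μ (χ • v + (1 - χ) • w) = χ * pn μ v + (1 - χ) * pn μ w := by
  set u := χ • v + (1 - χ) • w
  have hv : χ • u = χ • v := by
    simp only [u, smul_add, smul_smul, hχ.eq, hχ.mul_one_sub_self, zero_smul, add_zero]
  have hw : (1 - χ) • u = (1 - χ) • w := by
    simp only [u, smul_add, smul_smul, hχ.one_sub.eq, hχ.one_sub_mul_self, zero_smul, zero_add]
  calc pn μ u = χ * pn μ u + (1 - χ) * pn μ u := by ring
    _ = pn μ (χ • u) + pn μ ((1 - χ) • u) := by
      rw [pn_smul_of_nonneg h0, pn_smul_of_nonneg (sub_nonneg.2 h1)]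
    _ = χ * pn μ v + (1 - χ) * pn μ w := by
      rw [hv, hw, pn_smul_of_nonneg h0, pn_smul_of_nonneg (sub_nonneg.2 h1)]

variable (μ M) in
/-- The group norm `v ↦ ∫ min(|v|, 1)` on a Banach `L⁰`-module. It is not homogeneous, but it
induces the distance `dM`, so that results on complete normed groups apply. -/
def modNorm : AddGroupNorm M where
  toFun v := dL0 μ (pn μ v) 0
  map_zero' := by rw [pn_zero, dL0_self]
  add_le' v w := dL0_le_add_of_abs_le <| by
    simpa only [abs_of_nonneg (pn_nonneg _)] using pn_add_le v w
  neg' v := by rw [pn_neg]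
  eq_zero_of_map_eq_zero' v hv := pn_eq_zero.1 (dL0_zero_right_nonpos_iff.1 hv.le)

variable (μ M) in
/-- A Banach `L⁰`-module as a normed group, with the norm `modNorm`. It is not a global instance,
since the measure `μ` cannot be inferred from the type `M`. -/
abbrev modNormed : NormedAddCommGroup M := (modNorm μ M).toNormedAddCommGroup

variable (μ M) in
lemma completeSpace_modNormed :
    @CompleteSpace M (modNormed μ M).toPseudoMetricSpace.toUniformSpace := by
  let := modNormed μ M
  refine Metric.complete_of_cauchySeq_tendsto fun u hu => ?_
  obtain ⟨v, hv⟩ := BanachMod.complete (μ := μ) u fun ε hε => by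
    have hcauchy := Metric.cauchySeq_iff.1 hu ε hε
    simp only [dist_eq_norm] at hcauchy
    exact hcauchy
  exact ⟨v, tendsto_iff_norm_sub_tendsto_zero.2 hv⟩

variable (μ) in
/-- Density of a subset of a Banach `L⁰`-module with respect to the distance `dM`. -/
def IsDenseMod (s : Set M) : Prop := ∀ v : M, ∀ ε > 0, ∃ a ∈ s, dM μ a v < ε

lemma IsDenseMod.isGLB_image_pn_sub {s : Set M} (hs : IsDenseMod μ s) (v : M) :
    IsGLB ((fun a => pn μ (a - v)) '' s) 0 := by
  refine ⟨forall_mem_image.2 fun a _ => pn_nonneg _,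
    fun f hf => nonpos_of_forall_exists_le_dL0_lt fun ε hε => ?_⟩
  obtain ⟨a, ha, hav⟩ := hs v ε hε
  exact ⟨pn μ (a - v), hf ⟨a, ha, rfl⟩, hav⟩

variable {N : Type*} [AddCommGroup N] [Module (L0 μ) N]

variable (μ) in
/-- The pointwise norms of the elements of the fibre `T⁻¹(w)`; a quotient operator is one for which
the infimum of this set is `|w|`. -/
def fiberNorms (T : M →ₗ[L0 μ] N) (w : N) : Set (L0 μ) := {g | ∃ v, T v = w ∧ g = pn μ v}

lemma nonneg_of_mem_fiberNorms {T : M →ₗ[L0 μ] N} {w : N} {g : L0 μ}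
    (hg : g ∈ fiberNorms μ T w) : 0 ≤ g := by
  obtain ⟨v, -, rfl⟩ := hg
  exact pn_nonneg v

/-- Two preimages of `w` can be glued along the set where the first one has the smaller norm. -/
lemma infClosed_fiberNorms (T : M →ₗ[L0 μ] N) (w : N) : InfClosed (fiberNorms μ T w) := by
  rintro _ ⟨v₁, hv₁, rfl⟩ _ ⟨v₂, hv₂, rfl⟩
  obtain ⟨χ, hχ, h0, h1, hinf⟩ := L0.exists_isIdempotentElem_mul_add_eq_inf (pn μ v₁) (pn μ v₂)
  refine ⟨χ • v₁ + (1 - χ) • v₂, ?_, ?_⟩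
  · rw [map_add, map_smul, map_smul, hv₁, hv₂, ← add_smul, add_sub_cancel, one_smul]
  · rw [pn_smul_add_one_sub_smul hχ h0 h1, hinf]

variable [BanachMod μ N]

lemma IsHom.pn_map_le_of_isDenseMod {T : M →ₗ[L0 μ] N} (hT : IsHom μ T) {s : Set M}
    (hs : IsDenseMod μ s) (hTs : ∀ a ∈ s, pn μ (T a) ≤ pn μ a) (v : M) :
    pn μ (T v) ≤ pn μ v := by
  obtain ⟨g, hg0, hg⟩ := hT
  have hglb := L0.isGLB_image_mul_left (add_nonneg zero_le_one hg0) (hs.isGLB_image_pn_sub v)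
  rw [mul_zero, image_image] at hglb
  refine sub_nonpos.1 (hglb.2 (forall_mem_image.2 fun a ha => ?_))
  have hTv : pn μ (T v) ≤ g * pn μ (a - v) + pn μ a :=
    calc pn μ (T v) ≤ pn μ (T v - T a) + pn μ (T a) := pn_le_pn_sub_add _ _
      _ = pn μ (T (a - v)) + pn μ (T a) := by rw [pn_sub_rev, map_sub]
      _ ≤ g * pn μ (a - v) + pn μ a := add_le_add (hg _) (hTs a ha)
  calc pn μ (T v) - pn μ v ≤ g * pn μ (a - v) + (pn μ (a - v) + pn μ v) - pn μ v :=
        sub_le_sub_right (hTv.trans (add_le_add_right (pn_le_pn_sub_add a v) _)) _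
    _ = (1 + g) * pn μ (a - v) := by ring

lemma IsQuotientOp.isGLB_fiberNorms {T : M →ₗ[L0 μ] N} (hT : IsQuotientOp μ T) (w : N) :
    IsGLB (fiberNorms μ T w) (pn μ w) := hT.2.2 w

lemma IsQuotientOp.pn_map_le {T : M →ₗ[L0 μ] N} (hT : IsQuotientOp μ T) (v : M) :
    pn μ (T v) ≤ pn μ v := (hT.isGLB_fiberNorms (T v)).1 ⟨v, rfl, rfl⟩

lemma exists_map_eq_dL0_pn_sub_lt {T : M →ₗ[L0 μ] N} {w : N} (hw : w ∈ LinearMap.range T)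
    (hglb : IsGLB (fiberNorms μ T w) (pn μ w)) {ε : ℝ} (hε : 0 < ε) :
    ∃ v, T v = w ∧ dL0 μ (pn μ v - pn μ w) 0 < ε := by
  obtain ⟨v₀, hv₀⟩ := hw
  have hne : (fiberNorms μ T w).Nonempty := ⟨pn μ v₀, v₀, hv₀, rfl⟩
  obtain ⟨_, ⟨v, hv, rfl⟩, hvε⟩ :=
    exists_mem_dL0_sub_lt_of_isGLB hne (infClosed_fiberNorms T w) hglb hε
  exact ⟨v, hv, hvε⟩

lemma isHom_of_pn_map_le {T : M →ₗ[L0 μ] N} (hT : ∀ v, pn μ (T v) ≤ pn μ v) : IsHom μ T :=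
  ⟨1, zero_le_one, fun v => (hT v).trans_eq (one_mul _).symm⟩

lemma modNorm_map_le {T : M →ₗ[L0 μ] N} (hT : ∀ v, pn μ (T v) ≤ pn μ v) (v : M) :
    modNorm μ N (T v) ≤ modNorm μ M v :=
  dL0_mono (pn_nonneg _) (hT v)

lemma exists_map_eq_modNorm_le {T : M →ₗ[L0 μ] N} {w : N} (hw : w ∈ LinearMap.range T)
    (hglb : IsGLB (fiberNorms μ T w) (pn μ w)) {C : ℝ} (hC : 1 < C) :
    ∃ v, T v = w ∧ modNorm μ M v ≤ C * modNorm μ N w := by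
  obtain rfl | hw0 := eq_or_ne w 0
  · exact ⟨0, map_zero T, by rw [map_zero, map_zero, mul_zero]⟩
  have hpos : 0 < modNorm μ N w := map_pos_of_ne_zero _ hw0
  obtain ⟨v, hv, hvε⟩ :=
    exists_map_eq_dL0_pn_sub_lt hw hglb (mul_pos (sub_pos.2 hC) hpos)
  have hadd : modNorm μ M v ≤ dL0 μ (pn μ v - pn μ w) 0 + modNorm μ N w :=
    dL0_le_add_of_abs_le <| by
      simpa only [sub_add_cancel] using abs_add_le (pn μ v - pn μ w) (pn μ w)
  exact ⟨v, hv, by linarith⟩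

lemma exists_map_eq_modNorm_le_of_dense {T : M →ₗ[L0 μ] N} (hT : ∀ v, pn μ (T v) ≤ pn μ v)
    {K : AddSubgroup N} (hK : IsDenseMod μ (K : Set N)) {C ε : ℝ} (hC : 0 < C) (hε : 0 < ε)
    (hKT : ∀ q ∈ K, ∃ v, T v = q ∧ modNorm μ M v ≤ C * modNorm μ N q) (w : N) :
    ∃ v, T v = w ∧ modNorm μ M v ≤ (C + ε) * modNorm μ N w := by
  let := modNormed μ M
  let := modNormed μ N
  have := completeSpace_modNormed μ M
  let f : NormedAddGroupHom M N := AddMonoidHom.mkNormedAddGroupHom T.toAddMonoidHom 1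
    fun v => (modNorm_map_le hT v).trans_eq (one_mul _).symm
  have hf : f.SurjectiveOnWith K C := hKT
  refine controlled_closure_of_complete hC hε hf w (Metric.mem_closure_iff.2 fun δ hδ => ?_)
  obtain ⟨q, hq, hqw⟩ := hK w δ hδ
  exact ⟨q, hq, by rwa [dist_comm, dist_eq_norm]⟩

lemma isGLB_fiberNorms_of_dense {T : M →ₗ[L0 μ] N} (hT : ∀ v, pn μ (T v) ≤ pn μ v)
    {K : Set N} (hK : IsDenseMod μ K) {C : ℝ} (hC : 0 < C)
    (hlift : ∀ w, ∃ v, T v = w ∧ modNorm μ M v ≤ C * modNorm μ N w)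
    (hglb : ∀ q ∈ K, IsGLB (fiberNorms μ T q) (pn μ q)) (w : N) :
    IsGLB (fiberNorms μ T w) (pn μ w) := by
  refine ⟨?_, fun h hh => sub_nonpos.1 (nonpos_of_forall_exists_le_dL0_lt fun ε hε => ?_)⟩
  · rintro _ ⟨v, rfl, rfl⟩
    exact hT v
  -- Lift `w = q + (w - q)` with `q ∈ K` close to `w`: `h` is below the norm of every such lift.
  obtain ⟨q, hq, hqw⟩ := hK w (ε / (C + 1)) (by positivity)
  obtain ⟨t, ht, htC⟩ := hlift (w - q)
  have hhq : h - pn μ t ≤ pn μ q := (hglb q hq).2 <| by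
    rintro _ ⟨v, hv, rfl⟩
    exact sub_le_iff_le_add.2
      ((hh ⟨v + t, by rw [map_add, hv, ht, add_sub_cancel], rfl⟩).trans (pn_add_le v t))
  refine ⟨pn μ t + pn μ (w - q), ?_, ?_⟩
  · have hqw' : pn μ q ≤ pn μ (w - q) + pn μ w := by
      rw [pn_sub_rev w q]
      exact pn_le_pn_sub_add q w
    linear_combination hhq + hqw'
  · have hdist : modNorm μ N (w - q) < ε / (C + 1) := by rwa [← map_sub_rev]
    calc dL0 μ (pn μ t + pn μ (w - q)) 0 ≤ modNorm μ M t + modNorm μ N (w - q) :=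
          dL0_le_add_of_abs_le (abs_add_le _ _)
      _ ≤ (C + 1) * modNorm μ N (w - q) := by linarith
      _ < ε := (lt_div_iff₀' (by positivity)).1 hdist

lemma isQuotientOp_of_dense {T : M →ₗ[L0 μ] N} (hT : ∀ v, pn μ (T v) ≤ pn μ v)
    {K : AddSubgroup N} (hK : IsDenseMod μ (K : Set N))
    (hsurj : ∀ q ∈ K, q ∈ LinearMap.range T)
    (hglb : ∀ q ∈ K, IsGLB (fiberNorms μ T q) (pn μ q)) : IsQuotientOp μ T := by
  have hlift := exists_map_eq_modNorm_le_of_dense hT hK two_pos one_pos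
    fun q hq => exists_map_eq_modNorm_le (hsurj q hq) (hglb q hq) one_lt_two
  exact ⟨isHom_of_pn_map_le hT, fun w => (hlift w).imp fun _ => And.left,
    isGLB_fiberNorms_of_dense hT hK (by norm_num) hlift hglb⟩

end Modules

section Tensor

open scoped Pointwise

variable {μ : Measure X} [SFinite μ]
  {M : Type*} [AddCommGroup M] [Module (L0 μ) M] [BanachMod μ M]
  {N : Type*} [AddCommGroup N] [Module (L0 μ) N] [BanachMod μ N]
  {M' : Type*} [AddCommGroup M'] [Module (L0 μ) M'] [BanachMod μ M']
  {N' : Type*} [AddCommGroup N'] [Module (L0 μ) N'] [BanachMod μ N']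
  {P : Type*} [AddCommGroup P] [Module (L0 μ) P] [BanachMod μ P]
  {P' : Type*} [AddCommGroup P'] [Module (L0 μ) P'] [BanachMod μ P']
  {e : M ⊗[L0 μ] N →ₗ[L0 μ] P} {e' : M' ⊗[L0 μ] N' →ₗ[L0 μ] P'}
  {T : M →ₗ[L0 μ] M'} {S : N →ₗ[L0 μ] N'} {TS : P →ₗ[L0 μ] P'}

lemma IsPiTensor.isDenseMod_range (hP : IsPiTensor μ M N P e) :
    IsDenseMod μ (LinearMap.range e : Set P) := fun p ε hε =>
  have ⟨α, hα⟩ := hP.dense p ε hε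
  ⟨e α, ⟨α, rfl⟩, hα⟩

lemma IsPiTensor.pn_sum_tmul_le (hP : IsPiTensor μ M N P e) {n : ℕ} (v : Fin n → M)
    (w : Fin n → N) : pn μ (e (∑ i, v i ⊗ₜ[L0 μ] w i)) ≤ ∑ i, pn μ (v i) * pn μ (w i) :=
  (hP.pn_emb _).1 ⟨n, v, w, rfl, rfl⟩

lemma IsPiTensor.pn_map_le (hP : IsPiTensor μ M N P e) (hP' : IsPiTensor μ M' N' P' e')
    (hT : ∀ v, pn μ (T v) ≤ pn μ v) (hS : ∀ w, pn μ (S w) ≤ pn μ w) (α : M ⊗[L0 μ] N) :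
    pn μ (e' (TensorProduct.map T S α)) ≤ pn μ (e α) := by
  refine (hP.pn_emb α).2 ?_
  rintro _ ⟨n, v, w, rfl, rfl⟩
  calc pn μ (e' (TensorProduct.map T S (∑ i, v i ⊗ₜ[L0 μ] w i)))
      = pn μ (e' (∑ i, T (v i) ⊗ₜ[L0 μ] S (w i))) := by simp only [map_sum, map_tmul]
    _ ≤ ∑ i, pn μ (T (v i)) * pn μ (S (w i)) := hP'.pn_sum_tmul_le _ _
    _ ≤ ∑ i, pn μ (v i) * pn μ (w i) := Finset.sum_le_sum fun i _ =>
      mul_le_mul (hT (v i)) (hS (w i)) (pn_nonneg _) (pn_nonneg _)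

lemma IsQuotientOp.isGLB_sum_fiberNorms_mul (hT : IsQuotientOp μ T) (hS : IsQuotientOp μ S)
    {n : ℕ} (v : Fin n → M') (w : Fin n → N') :
    IsGLB (∑ i, fiberNorms μ T (v i) * fiberNorms μ S (w i)) (∑ i, pn μ (v i) * pn μ (w i)) :=
  isGLB_finsetSum fun i _ => L0.isGLB_mul (fun _ => nonneg_of_mem_fiberNorms)
    (fun _ => nonneg_of_mem_fiberNorms) (hT.isGLB_fiberNorms (v i)) (hS.isGLB_fiberNorms (w i))

lemma IsPiTensor.isGLB_fiberNorms_map (hP : IsPiTensor μ M N P e) (hP' : IsPiTensor μ M' N' P' e')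
    (hT : IsQuotientOp μ T) (hS : IsQuotientOp μ S)
    (hcomp : ∀ α, TS (e α) = e' (TensorProduct.map T S α)) (hTS : ∀ p, pn μ (TS p) ≤ pn μ p)
    (α' : M' ⊗[L0 μ] N') : IsGLB (fiberNorms μ TS (e' α')) (pn μ (e' α')) := by
  refine ⟨?_, fun h hh => (hP'.pn_emb α').2 ?_⟩
  · rintro _ ⟨p, hp, rfl⟩
    exact hp ▸ hTS p
  -- Lifting the factors of a representation of `α'` one by one gives a representation of a lift.
  rintro _ ⟨n, v', w', rfl, rfl⟩
  refine (hT.isGLB_sum_fiberNorms_mul hS v' w').2 fun g hg => ?_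
  obtain ⟨r, hr, rfl⟩ := (Set.mem_fintype_sum _ g).1 hg
  choose a ha b hb hab using fun i => Set.mem_mul.1 (hr i)
  choose v hv hav using ha
  choose w hw hbw using hb
  have hmem : TS (e (∑ i, v i ⊗ₜ[L0 μ] w i)) = e' (∑ i, v' i ⊗ₜ[L0 μ] w' i) := by
    simp only [hcomp, map_sum, map_tmul, hv, hw]
  calc h ≤ pn μ (e (∑ i, v i ⊗ₜ[L0 μ] w i)) := hh ⟨_, hmem, rfl⟩
    _ ≤ ∑ i, pn μ (v i) * pn μ (w i) := hP.pn_sum_tmul_le v w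
    _ = ∑ i, r i := by simp only [← hab, ← hav, ← hbw]

theorem projective_tensor_of_quotient_ops_general (hP : IsPiTensor μ M N P e)
    (hP' : IsPiTensor μ M' N' P' e') (hT : IsQuotientOp μ T) (hS : IsQuotientOp μ S)
    (hTS : IsHom μ TS) (hTSe : ∀ v w, TS (e (v ⊗ₜ[L0 μ] w)) = e' (T v ⊗ₜ[L0 μ] S w)) :
    IsQuotientOp μ TS := by
  have hcomp (α : M ⊗[L0 μ] N) : TS (e α) = e' (TensorProduct.map T S α) :=
    LinearMap.congr_fun (TensorProduct.ext' hTSe : TS ∘ₗ e = e' ∘ₗ TensorProduct.map T S) α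
  have hcontr : ∀ p, pn μ (TS p) ≤ pn μ p := by
    refine hTS.pn_map_le_of_isDenseMod hP.isDenseMod_range ?_
    rintro _ ⟨α, rfl⟩
    rw [hcomp]
    exact hP.pn_map_le hP' hT.pn_map_le hS.pn_map_le α
  refine isQuotientOp_of_dense (K := (LinearMap.range e').toAddSubgroup) hcontr
    hP'.isDenseMod_range ?_ ?_
  · rintro _ ⟨α', rfl⟩
    obtain ⟨α, rfl⟩ := TensorProduct.map_surjective hT.2.1 hS.2.1 α'
    exact ⟨e α, hcomp α⟩
  · rintro _ ⟨α', rfl⟩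
    exact hP.isGLB_fiberNorms_map hP' hT hS hcomp hcontr α'

end Tensor

/-- Let `T : ℳ → ℳ'` and `S : 𝒩 → 𝒩'` be quotient operators between
Banach `L⁰(𝕏)`-modules. Then `T ⊗_π S : ℳ ⊗̂_π 𝒩 → ℳ' ⊗̂_π 𝒩'`, the unique homomorphism
with `(T ⊗_π S)(v ⊗ w) = T v ⊗ S w`, is a quotient operator. -/
theorem projective_tensor_of_quotient_ops
    (μ : Measure X) [SigmaFinite μ]
    (M : Type*) [AddCommGroup M] [Module (L0 μ) M] [BanachMod μ M]
    (N : Type*) [AddCommGroup N] [Module (L0 μ) N] [BanachMod μ N]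
    (M' : Type*) [AddCommGroup M'] [Module (L0 μ) M'] [BanachMod μ M']
    (N' : Type*) [AddCommGroup N'] [Module (L0 μ) N'] [BanachMod μ N']
    (P : Type*) [AddCommGroup P] [Module (L0 μ) P] [BanachMod μ P]
    (P' : Type*) [AddCommGroup P'] [Module (L0 μ) P'] [BanachMod μ P']
    (e : M ⊗[L0 μ] N →ₗ[L0 μ] P) (hP : IsPiTensor μ M N P e)
    (e' : M' ⊗[L0 μ] N' →ₗ[L0 μ] P') (hP' : IsPiTensor μ M' N' P' e')
    (T : M →ₗ[L0 μ] M') (S : N →ₗ[L0 μ] N')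
    (hT : IsQuotientOp μ T) (hS : IsQuotientOp μ S)
    (TS : P →ₗ[L0 μ] P') (hTS : IsHom μ TS)
    (hTSe : ∀ (v : M) (w : N), TS (e (v ⊗ₜ[L0 μ] w)) = e' (T v ⊗ₜ[L0 μ] S w)) :
    IsQuotientOp μ TS :=
  projective_tensor_of_quotient_ops_general hP hP' hT hS hTS hTSe

end Paper
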